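/- Let P = (1 1; 1 2) and Q = (2 1; 1 1) in GL₂(ℤ). Then the subgroup of GL₂(ℤ) generated by P and Q is free of rank 2 with free basis {P, Q} (i.e. the homomorphism from the free group on two generators to GL₂(ℤ) sending the generators to P and Q is injective), and this subgroup has index 24 in GL₂(ℤ). -/

import Mathlib

/-!
Freeness is ping-pong: cut the real projective line into the four half-open intervals `[0, 1)`,
`[1, ∞)`, `[∞, -1)`, `[-1, 0)`, attached to `P`, `Q`, `P⁻¹`, `Q⁻¹`. Each of these matrices sends
the complement of its inverse's interval into its own interval, so no base point is left over.

For the index, `⟨P, Q⟩` is normal in `SL₂(ℤ)`: conjugation by the generators `S` and `T` preserves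
it. Modulo `⟨P, Q⟩` one has `S = T⁻³`, so the quotient is cyclic, generated by `T`, and `S⁴ = 1`
gives `T¹² = 1`. The abelianization `SL₂(ℤ) → ℤ/12` sends `T` to `1` and kills `P` and `Q`, so the
quotient has exactly 12 elements; and `SL₂(ℤ)` has index 2 in `GL₂(ℤ)`.
-/

open Matrix

/-- The matrix `P = (1 1; 1 2)` as an element of `GL₂(ℤ)`. -/
def Pgl : GL (Fin 2) ℤ :=
  ⟨!![1, 1; 1, 2], !![2, -1; -1, 1],
    by norm_num [Matrix.mul_fin_two, ← Matrix.one_fin_two],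
    by norm_num [Matrix.mul_fin_two, ← Matrix.one_fin_two]⟩

/-- The matrix `Q = (2 1; 1 1)` as an element of `GL₂(ℤ)`. -/
def Qgl : GL (Fin 2) ℤ :=
  ⟨!![2, 1; 1, 1], !![1, -1; -1, 2],
    by norm_num [Matrix.mul_fin_two, ← Matrix.one_fin_two],
    by norm_num [Matrix.mul_fin_two, ← Matrix.one_fin_two]⟩

section PingPong

universe u

variable {ι G : Type u} {α : Type*} [Group G] [MulAction G α]

open scoped Pointwise Function in
/-- The cell of the letter `(i, true)`, which stands for `a i`, attracts everything outside the
cell of `(i, false)`, which stands for `(a i)⁻¹`, and vice versa. -/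
theorem injective_lift_of_pingPong_partition [Nontrivial ι] [Nonempty α] (a : ι → G)
    (cell : α → ι × Bool)
    (h_pos : ∀ i x, cell x ≠ (i, false) → cell (a i • x) = (i, true))
    (h_neg : ∀ i x, cell x ≠ (i, true) → cell ((a i)⁻¹ • x) = (i, false)) :
    Function.Injective (FreeGroup.lift a) := by
  have disjoint_fibers {p q : ι × Bool} (hpq : p ≠ q) : Disjoint (cell ⁻¹' {p}) (cell ⁻¹' {q}) :=
    (Set.disjoint_singleton.2 hpq).preimage cell
  have attracting_nonempty (i : ι) : (cell ⁻¹' {(i, true)}).Nonempty := by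
    obtain ⟨x⟩ := ‹Nonempty α›
    obtain ⟨j, hji⟩ := exists_ne i
    by_cases hx : cell x = (i, false)
    · have hjx : cell (a j • x) = (j, true) := h_pos j x (by simp [hx, hji.symm])
      exact ⟨a i • a j • x, h_pos i _ (by simp [hjx])⟩
    · exact ⟨a i • x, h_pos i x hx⟩
  refine FreeGroup.injective_lift_of_ping_pong a
    (fun i ↦ cell ⁻¹' {(i, true)}) (fun i ↦ cell ⁻¹' {(i, false)}) attracting_nonempty
    (fun i j hij ↦ disjoint_fibers (by simp [hij]))
    (fun i j hij ↦ disjoint_fibers (by simp [hij]))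
    (fun i j ↦ disjoint_fibers (by simp)) ?_ ?_
  · rintro i _ ⟨x, hx, rfl⟩
    exact h_pos i x hx
  · rintro i _ ⟨x, hx, rfl⟩
    exact h_neg i x hx

end PingPong

section Freeness

/-- The cell of the projective line containing the point `x / y`, labelled by the letter of the
free group on `P = 0` and `Q = 1` that attracts it: the intervals `[0, 1)`, `[1, ∞)`, `[∞, -1)`,
`[-1, 0)` belong to `P`, `Q`, `P⁻¹`, `Q⁻¹`. Each interval appears as its two preimages, exchanged
by the sign, among the nonzero integer vectors. -/
def slopeCell (x y : ℤ) : Fin 2 × Bool :=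
  if (0 ≤ x ∧ x < y) ∨ (y < x ∧ x ≤ 0) then (0, true)
  else if (0 < y ∧ y ≤ x) ∨ (x ≤ y ∧ y < 0) then (1, true)
  else if (-y ≤ x ∧ x < 0) ∨ (0 < x ∧ x ≤ -y) then (1, false)
  else (0, false)

variable {x y : ℤ}

theorem slopeCell_P (hxy : x ≠ 0 ∨ y ≠ 0) (h : slopeCell x y ≠ (0, false)) :
    slopeCell (x + y) (x + 2 * y) = (0, true) := by
  grind (splits := 20) [slopeCell]

theorem slopeCell_Q (hxy : x ≠ 0 ∨ y ≠ 0) (h : slopeCell x y ≠ (1, false)) :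
    slopeCell (2 * x + y) (x + y) = (1, true) := by
  grind (splits := 20) [slopeCell]

theorem slopeCell_P_inv (hxy : x ≠ 0 ∨ y ≠ 0) (h : slopeCell x y ≠ (0, true)) :
    slopeCell (2 * x - y) (-x + y) = (0, false) := by
  grind (splits := 20) [slopeCell]

theorem slopeCell_Q_inv (hxy : x ≠ 0 ∨ y ≠ 0) (h : slopeCell x y ≠ (1, true)) :
    slopeCell (x - y) (-x + 2 * y) = (1, false) := by
  grind (splits := 20) [slopeCell]

theorem firstColumn_ne_zero {R : Type*} [CommRing R] [Nontrivial R] (g : GL (Fin 2) R) :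
    g 0 0 ≠ 0 ∨ g 1 0 ≠ 0 := by
  by_contra! hcol
  exact g.det_ne_zero (by rw [det_fin_two, hcol.1, hcol.2]; ring)

theorem injective_lift_Pgl_Qgl :
    Function.Injective (FreeGroup.lift ![Pgl, Qgl] : FreeGroup (Fin 2) →* GL (Fin 2) ℤ) := by
  refine injective_lift_of_pingPong_partition ![Pgl, Qgl]
    (fun g : GL (Fin 2) ℤ ↦ slopeCell (g 0 0) (g 1 0)) ?_ ?_
  · intro i g hg
    have hcol := firstColumn_ne_zero g
    fin_cases i
    · have := slopeCell_P hcol hg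
      simpa [Pgl, mul_apply, Fin.sum_univ_two] using this
    · have := slopeCell_Q hcol hg
      simpa [Qgl, mul_apply, Fin.sum_univ_two] using this
  · intro i g hg
    have hcol := firstColumn_ne_zero g
    fin_cases i
    · have := slopeCell_P_inv hcol hg
      simpa [Pgl, mul_apply, Fin.sum_univ_two, sub_eq_add_neg] using this
    · have := slopeCell_Q_inv hcol hg
      simpa [Qgl, mul_apply, Fin.sum_univ_two, sub_eq_add_neg] using this

end Freeness

open scoped MatrixGroups
open ModularGroup (S T)

section Generators

theorem submonoid_closure_S_T : Submonoid.closure ({S, T} : Set SL(2, ℤ)) = ⊤ := by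
  have hS : S ∈ Submonoid.closure {S, T} := Submonoid.subset_closure (by simp)
  have hT : T ∈ Submonoid.closure {S, T} := Submonoid.subset_closure (by simp)
  have hS_inv : S⁻¹ = S ^ 3 := by decide
  have hT_inv : T⁻¹ = (S * T) ^ 5 * S := by decide
  have h_le : ({S, T} ∪ {S, T}⁻¹ : Set SL(2, ℤ)) ⊆ Submonoid.closure {S, T} := by
    refine Set.union_subset Submonoid.subset_closure fun g hg ↦ ?_
    rcases hg with hg | hg
    · rw [inv_eq_iff_eq_inv.1 hg, hS_inv]
      exact pow_mem hS 3
    · rw [inv_eq_iff_eq_inv.1 hg, hT_inv]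
      exact mul_mem (pow_mem (mul_mem hS hT) 5) hS
  rw [eq_top_iff, ← Subgroup.top_toSubmonoid, ← SpecialLinearGroup.SL2Z_generators,
    Subgroup.closure_toSubmonoid]
  exact Submonoid.closure_le.2 h_le

theorem normal_closure_of_conj_mem {G : Type*} [Group G] {s t : Set G}
    (ht : Submonoid.closure t = ⊤)
    (h : ∀ g ∈ t, ∀ x ∈ s, g * x * g⁻¹ ∈ Subgroup.closure s) : (Subgroup.closure s).Normal := by
  suffices h_conj : ∀ g, Subgroup.closure s ≤
      (Subgroup.closure s).comap (MulAut.conj g).toMonoidHom from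
    ⟨fun x hx g ↦ h_conj g hx⟩
  intro g
  induction g using Submonoid.dense_induction (s := t) with
  | closure => exact ht
  | mem g hg => exact (Subgroup.closure_le _).2 (h g hg)
  | one => intro x hx; simpa using hx
  | mul g₁ g₂ h₁ h₂ => intro x hx; simpa [mul_assoc] using h₁ (h₂ hx)

theorem index_range_toGL {n R : Type*} [Fintype n] [DecidableEq n] [Nonempty n] [CommRing R] :
    (SpecialLinearGroup.toGL : SpecialLinearGroup n R →* GL n R).range.index = Nat.card Rˣ := by
  have h_range : (SpecialLinearGroup.toGL : SpecialLinearGroup n R →* GL n R).range =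
      (GeneralLinearGroup.det : GL n R →* Rˣ).ker :=
    SetLike.coe_injective SpecialLinearGroup.range_toGL
  rw [h_range, Subgroup.index_ker, MonoidHom.range_eq_top_of_surjective _
    GeneralLinearGroup.det_surjective, Subgroup.card_top]

end Generators

section Abelianization

/-- The abelianization of `SL₂(ℤ)` as a function of the entries of `(a b; c d)`; see
`abelianizationHom`. -/
def abelianizationPoly (a b c d : ZMod 12) : ZMod 12 :=
  (1 - c ^ 2) * (b * d + 3 * (c - 1) * d + c + 3) + c * (a + d - 3)

theorem eq_zero_of_mul_bottomRow_sq {R : Type*} [CommRing R] {a b c d x : R}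
    (hdet : a * d - b * c = 1) (hcc : x * c ^ 2 = 0) (hcd : x * (c * d) = 0)
    (hdd : x * d ^ 2 = 0) : x = 0 := by
  linear_combination a ^ 2 * hdd - 2 * a * b * hcd + b ^ 2 * hcc - x * (a * d - b * c + 1) * hdet

theorem abelianizationPoly_mul_S {a b c d : ZMod 12} (hdet : a * d - b * c = 1) :
    abelianizationPoly b (-a) d (-c) = abelianizationPoly a b c d - 3 := by
  -- Modulo the determinant relation, the two sides differ by a polynomial in the bottom row.
  have defect_eq_zero : 5 * c + c ^ 3 + d - d ^ 3 + 3 + 3 * c * d + 3 * c * d ^ 3 + 3 * c ^ 3 * d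
      - 3 * c * d ^ 2 - 3 * c ^ 2 * d - 3 * d ^ 2 + 3 * c ^ 2 = 0 := by
    apply eq_zero_of_mul_bottomRow_sq hdet <;> clear hdet <;> revert c d <;> decide
  have h12 : (12 : ZMod 12) = 0 := by decide
  unfold abelianizationPoly
  linear_combination defect_eq_zero - c * d * hdet - c * d * h12

theorem abelianizationPoly_mul_T {a b c d : ZMod 12} (hdet : a * d - b * c = 1) :
    abelianizationPoly a (a + b) c (c + d) = abelianizationPoly a b c d + 1 := by
  -- `c - c ^ 3` is `0` or `6`, and it is `0` unless `c` is even, in which case `a` is odd.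
  have h_two : ∀ c : ZMod 12, 2 * (c - c ^ 3) = 0 := by decide
  have h_self : ∀ c : ZMod 12, (c - c ^ 3) * c = 0 := by decide
  have h_consecutive : ∀ a c : ZMod 12, (c - c ^ 3) * (a * (a + 1)) = 0 := by decide
  have h_parity : (c - c ^ 3) * (a + c + 1) = 0 := by
    linear_combination d * h_consecutive a c + (d * a - b * (a + c + 1)) * h_self c
      - (c - c ^ 3) * (a + c + 1) * hdet
  unfold abelianizationPoly
  linear_combination h_parity + (b + c - 2) * h_two c + (1 - c ^ 2) * hdet

/-- The homomorphism `SL₂(ℤ) → ℤ/12` with `S ↦ -3` and `T ↦ 1`, written multiplicatively. It is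
the abelianization of `SL₂(ℤ)` and detects the order of `T` modulo `P` and `Q`. -/
def abelianizationHom : SL(2, ℤ) →* Multiplicative (ZMod 12) :=
  MonoidHom.ofClosureMEqTopRight
    (fun g ↦ .ofAdd (abelianizationPoly (g 0 0) (g 0 1) (g 1 0) (g 1 1)))
    submonoid_closure_S_T (by decide) <| by
      intro g s hs
      have hdet : (g 0 0 * g 1 1 - g 0 1 * g 1 0 : ZMod 12) = 1 := by
        exact_mod_cast congrArg (Int.cast : ℤ → ZMod 12) ((det_fin_two g.1).symm.trans g.2)
      have hS : abelianizationPoly 0 (-1) 1 0 = -3 := by decide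
      have hT : abelianizationPoly 1 1 0 1 = 1 := by decide
      refine congrArg Multiplicative.ofAdd (?_ : _ = _ + _)
      rcases hs with rfl | rfl
      · simpa [ModularGroup.coe_S, mul_apply, Fin.sum_univ_two, hS, sub_eq_add_neg] using
          abelianizationPoly_mul_S hdet
      · simpa [ModularGroup.coe_T, mul_apply, Fin.sum_univ_two, hT] using
          abelianizationPoly_mul_T hdet

end Abelianization

section Index

/-- The matrix `P` as an element of `SL₂(ℤ)`. -/
def Psl : SL(2, ℤ) := ⟨!![1, 1; 1, 2], by decide⟩

/-- The matrix `Q` as an element of `SL₂(ℤ)`. -/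
def Qsl : SL(2, ℤ) := ⟨!![2, 1; 1, 1], by decide⟩

/-- The subgroup generated by `P` and `Q`, inside `SL₂(ℤ)`. -/
def closurePQ : Subgroup SL(2, ℤ) := Subgroup.closure {Psl, Qsl}

theorem Psl_mem : Psl ∈ closurePQ := Subgroup.subset_closure (by simp)

theorem Qsl_mem : Qsl ∈ closurePQ := Subgroup.subset_closure (by simp)

theorem map_toGL_closurePQ :
    closurePQ.map SpecialLinearGroup.toGL = Subgroup.closure {Pgl, Qgl} := by
  have hP : SpecialLinearGroup.toGL Psl = Pgl := Units.ext rfl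
  have hQ : SpecialLinearGroup.toGL Qsl = Qgl := Units.ext rfl
  rw [closurePQ, MonoidHom.map_closure, Set.image_pair, hP, hQ]

instance normal_closurePQ : closurePQ.Normal := by
  refine normal_closure_of_conj_mem submonoid_closure_S_T ?_
  have hSP : S * Psl * S⁻¹ = Psl⁻¹ := by decide
  have hSQ : S * Qsl * S⁻¹ = Qsl⁻¹ := by decide
  have hTP : T * Psl * T⁻¹ = Qsl := by decide
  have hTQ : T * Qsl * T⁻¹ = Qsl * Psl⁻¹ := by decide
  rintro g (rfl | rfl) x (rfl | rfl)
  · rw [hSP]; exact inv_mem Psl_mem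
  · rw [hSQ]; exact inv_mem Qsl_mem
  · rw [hTP]; exact Qsl_mem
  · rw [hTQ]; exact mul_mem Qsl_mem (inv_mem Psl_mem)

theorem closurePQ_le_ker : closurePQ ≤ abelianizationHom.ker := by
  refine (Subgroup.closure_le _).2 ?_
  rintro g (rfl | rfl)
  · exact (by decide : abelianizationPoly 1 1 1 2 = 0)
  · exact (by decide : abelianizationPoly 2 1 1 1 = 0)

theorem mk_S_eq : (S : SL(2, ℤ) ⧸ closurePQ) = ((T : SL(2, ℤ) ⧸ closurePQ) ^ 3)⁻¹ := by
  have hST : S * T ^ 3 = Qsl⁻¹ * Psl := by decide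
  refine eq_inv_of_mul_eq_one_left ((QuotientGroup.eq_one_iff (S * T ^ 3)).2 ?_)
  exact hST ▸ mul_mem (inv_mem Qsl_mem) Psl_mem

theorem mem_zpowers_mk_T (q : SL(2, ℤ) ⧸ closurePQ) :
    q ∈ Subgroup.zpowers (T : SL(2, ℤ) ⧸ closurePQ) := by
  have h_le : Subgroup.closure {S, T} ≤
      (Subgroup.zpowers (T : SL(2, ℤ) ⧸ closurePQ)).comap (QuotientGroup.mk' closurePQ) := by
    refine (Subgroup.closure_le _).2 ?_
    rintro g (rfl | rfl)
    · rw [SetLike.mem_coe, Subgroup.mem_comap, QuotientGroup.mk'_apply, mk_S_eq]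
      exact inv_mem (Subgroup.npow_mem_zpowers _ 3)
    · exact Subgroup.mem_zpowers _
  obtain ⟨g, rfl⟩ := QuotientGroup.mk_surjective q
  exact h_le (SpecialLinearGroup.SL2Z_generators ▸ Subgroup.mem_top g)

theorem orderOf_mk_T : orderOf (T : SL(2, ℤ) ⧸ closurePQ) = 12 := by
  apply Nat.dvd_antisymm
  · have hS4 : (S : SL(2, ℤ) ⧸ closurePQ) ^ 4 = 1 :=
      congrArg QuotientGroup.mk (by decide : S ^ 4 = 1)
    rw [mk_S_eq, inv_pow, inv_eq_one, ← pow_mul] at hS4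
    exact orderOf_dvd_of_pow_eq_one hS4
  · have h_T : QuotientGroup.lift closurePQ abelianizationHom closurePQ_le_ker T = .ofAdd 1 := by
      decide
    calc 12 = orderOf (Multiplicative.ofAdd (1 : ZMod 12)) := by
          rw [orderOf_ofAdd_eq_addOrderOf, ZMod.addOrderOf_one]
      _ ∣ orderOf (T : SL(2, ℤ) ⧸ closurePQ) := h_T ▸ orderOf_map_dvd _ _

theorem index_closurePQ : closurePQ.index = 12 := by
  rw [Subgroup.index, ← orderOf_eq_card_of_forall_mem_zpowers mem_zpowers_mk_T, orderOf_mk_T]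

end Index

/-- The subgroup of `GL₂(ℤ)` generated by `P = (1 1; 1 2)` and `Q = (2 1; 1 1)` is free of
rank 2 with basis `{P, Q}` (the homomorphism from the free group on two generators sending
the generators to `P, Q` is injective), and it has index 24 in `GL₂(ℤ)`. -/
theorem PQ_free_basis_and_index_24 :
    Function.Injective (FreeGroup.lift ![Pgl, Qgl] : FreeGroup (Fin 2) →* GL (Fin 2) ℤ) ∧
      (Subgroup.closure {Pgl, Qgl}).index = 24 := by
  refine ⟨injective_lift_Pgl_Qgl, ?_⟩
  calc (Subgroup.closure {Pgl, Qgl}).index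
      = (closurePQ.map SpecialLinearGroup.toGL).index := by rw [map_toGL_closurePQ]
    _ = closurePQ.index * (SpecialLinearGroup.toGL : SL(2, ℤ) →* GL (Fin 2) ℤ).range.index :=
        Subgroup.index_map_of_injective closurePQ SpecialLinearGroup.toGL_injective
    _ = 12 * 2 := by rw [index_closurePQ, index_range_toGL, Nat.card_eq_fintype_card,
        Fintype.card_units_int]
    _ = 24 := by norm_num
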